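/- Let -1 < β < -1/2 ≤ α. Then for all t > 0 and θ, φ ∈ [0,π], 𝓗_t^{α,β}(θ,φ) = ∫_{(-1,1)} ∫_{[-1,1]} (−∂_v Ψ^{α,β}(t,θ,φ,u,v)) dΠ_α(u) Π_β(v) dv + ∫_{[-1,1]} ∫_{[-1,1]} Ψ^{α,β}(t,θ,φ,u,v) dΠ_α(u) dΠ_{-1/2}(v). -/

import Mathlib

open MeasureTheory Real Set
open scoped ENNReal Classical

noncomputable def cab (α β : ℝ) : ℝ :=
  Real.Gamma (α + β + 2) / (2 ^ (α + β + 1) * Real.Gamma (α + 1) * Real.Gamma (β + 1))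

noncomputable def F4 (a₁ a₂ b₁ b₂ x y : ℝ) : ℝ :=
  ∑' p : ℕ × ℕ,
    (Polynomial.eval a₁ (ascPochhammer ℝ (p.1 + p.2)) *
      Polynomial.eval a₂ (ascPochhammer ℝ (p.1 + p.2))) /
    (Polynomial.eval b₁ (ascPochhammer ℝ p.1) * Polynomial.eval b₂ (ascPochhammer ℝ p.2) *
      (Nat.factorial p.1) * (Nat.factorial p.2)) * x ^ p.1 * y ^ p.2

noncomputable def Hker (α β t θ φ : ℝ) : ℝ :=
  cab α β * Real.sinh (t / 2) / Real.cosh (t / 2) ^ (α + β + 2) *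
    F4 ((α + β + 2) / 2) ((α + β + 3) / 2) (α + 1) (β + 1)
      ((Real.sin (θ / 2) * Real.sin (φ / 2) / Real.cosh (t / 2)) ^ 2)
      ((Real.cos (θ / 2) * Real.cos (φ / 2) / Real.cosh (t / 2)) ^ 2)

noncomputable def qf (θ φ u v : ℝ) : ℝ :=
  1 - u * Real.sin (θ / 2) * Real.sin (φ / 2) - v * Real.cos (θ / 2) * Real.cos (φ / 2)

noncomputable def Psi (α β t θ φ u v : ℝ) : ℝ :=
  cab α β * Real.sinh (t / 2) / (Real.cosh (t / 2) - 1 + qf θ φ u v) ^ (α + β + 2)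

noncomputable def PsiE (α β t θ φ u v : ℝ) : ℝ :=
  (Psi α β t θ φ u v + Psi α β t θ φ (-u) v + Psi α β t θ φ u (-v) +
    Psi α β t θ φ (-u) (-v)) / 4

noncomputable def PiMeas (ν : ℝ) : Measure ℝ :=
  if ν = -(1/2) then (2⁻¹ : ℝ≥0∞) • (Measure.dirac (-1) + Measure.dirac 1)
  else (volume.restrict (Icc (-1 : ℝ) 1)).withDensity
    (fun u => ENNReal.ofReal
      (Real.Gamma (ν + 1) / (Real.sqrt π * Real.Gamma (ν + 1/2)) * (1 - u ^ 2) ^ (ν - 1/2)))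

noncomputable def PiFun (γ u : ℝ) : ℝ :=
  Real.Gamma (γ + 1) / (Real.sqrt π * Real.Gamma (γ + 1/2)) *
    ∫ w in (0 : ℝ)..u, (1 - w ^ 2) ^ (γ - 1/2)

noncomputable def PiInt (ν : ℝ) (S : Set ℝ) (f : ℝ → ℝ) : ℝ :=
  if ν = -(1/2) then
    ((if (-1 : ℝ) ∈ S then f (-1) else 0) + (if (1 : ℝ) ∈ S then f 1 else 0)) / 2
  else ∫ u in S, f u *
    (Real.Gamma (ν + 1) / (Real.sqrt π * Real.Gamma (ν + 1/2)) * (1 - u ^ 2) ^ (ν - 1/2))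

noncomputable def muab (α β : ℝ) : Measure ℝ :=
  (volume.restrict (Icc (0 : ℝ) π)).withDensity
    (fun θ => ENNReal.ofReal (Real.sin (θ / 2) ^ (2 * α + 1) * Real.cos (θ / 2) ^ (2 * β + 1)))

def ballI (θ r : ℝ) : Set ℝ := Ioo (θ - r) (θ + r) ∩ Icc 0 π

/-! Put `x = sin (θ / 2) sin (φ / 2) / cosh (t / 2)`, `y = cos (θ / 2) cos (φ / 2) / cosh (t / 2)`
and `a = α + β + 2`. Then `|x| + |y| < 1` and, up to a factor free of `u` and `v`, `Psi` is
`(1 - (u x + v y)) ^ (-a)`. Expand this as a double power series in `u x` and `v y` and integrate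
term by term. By the duplication formulas for `(a)_{2k}` and `(2k)!`, the series `F4` arises when
`u ^ m` and `v ^ n` are replaced by the moments of orders `α` and `β`. The former come from
`PiMeas α`. The latter, which no measure produces when `β < -1 / 2`, come from `PiFun β`: up to the
factor `n + 1`, integrating `v ^ n` against it gives the difference of the `(n + 1)`-st moments of
orders `-1 / 2` and `β`. For `β > -1 / 2` this is integration by parts, and the contiguous relation
between `PiFun β` and `PiFun (β + 1)` carries it over to `-1 < β < -1 / 2`. -/

section Series

lemma ascPochhammer_eval_two_mul (a : ℝ) (k : ℕ) :
    (ascPochhammer ℝ (2 * k)).eval a =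
      4 ^ k * (ascPochhammer ℝ k).eval (a / 2) * (ascPochhammer ℝ k).eval ((a + 1) / 2) := by
  induction k with
  | zero => simp
  | succ k ih =>
    rw [mul_add_one, ascPochhammer_succ_eval, ascPochhammer_succ_eval, ih,
      ascPochhammer_succ_eval, ascPochhammer_succ_eval]
    push_cast
    ring

lemma factorial_two_mul_eq (k : ℕ) :
    ((2 * k).factorial : ℝ) = 4 ^ k * (ascPochhammer ℝ k).eval (1 / 2) * k.factorial := by
  rw [← ascPochhammer_eval_one ℝ (2 * k), ascPochhammer_eval_two_mul, add_self_div_two,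
    ascPochhammer_eval_one]

lemma hasSum_one_sub_rpow_neg (a : ℝ) {z : ℝ} (hz : |z| < 1) :
    HasSum (fun k : ℕ => (ascPochhammer ℝ k).eval a / k.factorial * z ^ k) ((1 - z) ^ (-a)) := by
  have h := (one_div_one_sub_rpow_hasFPowerSeriesOnBall_zero a).hasSum (y := z)
    (by simpa [Metric.mem_eball, edist_dist, Real.dist_eq] using hz)
  rw [zero_add, one_div, ← rpow_neg (by linarith [le_abs_self z])] at h
  convert! h using 2 with k
  rw [FormalMultilinearSeries.ofScalars_apply_eq, smul_eq_mul,
    ← Polynomial.ascPochhammer_smeval_eq_eval, ← Ring.factorial_nsmul_multichoose_eq_ascPochhammer,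
    ← Ring.multichoose_eq, nsmul_eq_mul, mul_div_cancel_left₀ _ (by positivity)]

lemma sum_antidiagonal_coeff_mul_choose_mul_pow {R : Type*} [CommSemiring R] (b : ℕ → R)
    (x y : R) (k : ℕ) :
    ∑ p ∈ Finset.HasAntidiagonal.antidiagonal k,
      b (p.1 + p.2) * (p.1 + p.2).choose p.1 * x ^ p.1 * y ^ p.2 = b k * (x + y) ^ k := by
  rw [(Commute.all x y).add_pow', Finset.mul_sum]
  refine Finset.sum_congr rfl fun p hp => ?_
  rw [Finset.HasAntidiagonal.mem_antidiagonal.1 hp, nsmul_eq_mul]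
  ring

lemma hasSum_coeff_mul_choose_mul_pow {𝕜 : Type*} [RCLike 𝕜] {b : ℕ → 𝕜} {x y s : 𝕜}
    (hb : Summable fun k => ‖b k‖ * (‖x‖ + ‖y‖) ^ k)
    (hs : HasSum (fun k => b k * (x + y) ^ k) s) :
    HasSum (fun p : ℕ × ℕ => b (p.1 + p.2) * (p.1 + p.2).choose p.1 * x ^ p.1 * y ^ p.2) s := by
  rw [← Finset.HasAntidiagonal.sigmaAntidiagonalEquivProd.hasSum_iff]
  refine hs.sigma_of_hasSum (fun k => ?_) (Summable.of_norm ?_)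
  · rw [← sum_antidiagonal_coeff_mul_choose_mul_pow]
    exact Finset.hasSum _ _
  · refine (summable_sigma_of_nonneg fun _ => norm_nonneg _).2 ⟨fun k => .of_finite, ?_⟩
    convert! hb using 2 with k
    rw [← sum_antidiagonal_coeff_mul_choose_mul_pow (fun k => ‖b k‖), tsum_fintype]
    simp only [Function.comp, Finset.HasAntidiagonal.sigmaAntidiagonalEquivProd_apply, norm_mul,
      norm_pow, RCLike.norm_natCast]
    exact Finset.sum_coe_sort _ fun p : ℕ × ℕ =>
      ‖b (p.1 + p.2)‖ * (p.1 + p.2).choose p.1 * ‖x‖ ^ p.1 * ‖y‖ ^ p.2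

/-- The coefficient of `x ^ p.1 * y ^ p.2` in the expansion of `(1 - (x + y)) ^ (-a)`. -/
noncomputable def appellCoeff (a : ℝ) (p : ℕ × ℕ) : ℝ :=
  (ascPochhammer ℝ (p.1 + p.2)).eval a / (p.1.factorial * p.2.factorial)

lemma hasSum_appellCoeff_mul_pow (a : ℝ) {x y : ℝ} (h : |x| + |y| < 1) :
    HasSum (fun p => appellCoeff a p * x ^ p.1 * y ^ p.2) ((1 - (x + y)) ^ (-a)) := by
  have habs : |(|x| + |y|)| = |x| + |y| := abs_of_nonneg (by positivity)
  convert! hasSum_coeff_mul_choose_mul_pow (x := x) (y := y) ?_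
    (hasSum_one_sub_rpow_neg a ((abs_add_le x y).trans_lt h)) using 4 with p
  · rw [appellCoeff, Nat.choose_symm_add, Nat.add_choose,
      Nat.cast_div (Nat.factorial_mul_factorial_dvd_factorial_add _ _) (by positivity)]
    push_cast
    field_simp
  · simpa only [Real.norm_eq_abs, abs_mul, abs_pow, habs] using
      (hasSum_one_sub_rpow_neg a (habs.trans_lt h)).summable.abs

lemma appellCoeff_snd_add_one (a : ℝ) (m n : ℕ) :
    appellCoeff a (m, n + 1) * (n + 1) = a * appellCoeff (a + 1) (m, n) := by
  simp only [appellCoeff, ← add_assoc, ascPochhammer_succ_left, Nat.factorial_succ,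
    Polynomial.eval_mul, Polynomial.eval_X, Polynomial.eval_comp, Polynomial.eval_add,
    Polynomial.eval_one]
  push_cast
  field_simp

end Series

/-- `E[u ^ n]` for the symmetric density proportional to `(1 - u ^ 2) ^ (ν - 1 / 2)` on `[-1, 1]`,
in the closed form that makes sense for every `ν > -1`. -/
noncomputable def gegenbauerMoment (ν : ℝ) (n : ℕ) : ℝ :=
  if Even n then (ascPochhammer ℝ (n / 2)).eval (1 / 2) / (ascPochhammer ℝ (n / 2)).eval (ν + 1)
  else 0

section Moments

lemma gegenbauerMoment_two_mul (ν : ℝ) (k : ℕ) : gegenbauerMoment ν (2 * k) =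
    (ascPochhammer ℝ k).eval (1 / 2) / (ascPochhammer ℝ k).eval (ν + 1) := by
  simp [gegenbauerMoment]

lemma gegenbauerMoment_of_odd (ν : ℝ) {n : ℕ} (hn : Odd n) : gegenbauerMoment ν n = 0 := by
  simp [gegenbauerMoment, hn]

lemma gegenbauerMoment_neg_half (n : ℕ) :
    gegenbauerMoment (-(1 / 2)) n = ((-1) ^ n + 1) / 2 := by
  rcases Nat.even_or_odd' n with ⟨k, rfl | rfl⟩
  · have hk : (ascPochhammer ℝ k).eval (1 / 2) ≠ 0 := (ascPochhammer_pos _ _ (by norm_num)).ne'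
    rw [gegenbauerMoment_two_mul, show (-(1 / 2) + 1 : ℝ) = 1 / 2 by norm_num, div_self hk,
      (even_two_mul k).neg_one_pow]
    norm_num
  · rw [gegenbauerMoment_of_odd _ (odd_two_mul_add_one k), (odd_two_mul_add_one k).neg_one_pow]
    norm_num

lemma ascPochhammer_eval_add_one_mul (x : ℝ) (k : ℕ) :
    x * (ascPochhammer ℝ k).eval (x + 1) = (ascPochhammer ℝ k).eval x * (x + k) := by
  rw [← ascPochhammer_succ_eval, ascPochhammer_succ_left]
  simp

lemma gegenbauerMoment_add_one_mul {ν : ℝ} (hν : -1 < ν) (n : ℕ) :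
    gegenbauerMoment (ν + 1) n * (1 + n / (2 * (ν + 1))) = gegenbauerMoment ν n := by
  rcases Nat.even_or_odd' n with ⟨k, rfl | rfl⟩
  · have hν₀ : ν + 1 ≠ 0 := by linarith
    have hnum := (ascPochhammer_pos k (ν + 1) (by linarith)).ne'
    have hden := (ascPochhammer_pos k (ν + 1 + 1) (by linarith)).ne'
    rw [gegenbauerMoment_two_mul, gegenbauerMoment_two_mul]
    push_cast
    field_simp
    linear_combination -(ascPochhammer ℝ k).eval (1 / 2) * ascPochhammer_eval_add_one_mul (ν + 1) k
  · rw [gegenbauerMoment_of_odd _ (odd_two_mul_add_one k),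
      gegenbauerMoment_of_odd _ (odd_two_mul_add_one k), zero_mul]

lemma F4_sq_eq_tsum (a α β x y : ℝ) :
    F4 (a / 2) ((a + 1) / 2) (α + 1) (β + 1) (x ^ 2) (y ^ 2) =
      ∑' p : ℕ × ℕ, appellCoeff a p * x ^ p.1 * y ^ p.2 *
        (gegenbauerMoment α p.1 * gegenbauerMoment β p.2) := by
  have hinj : Function.Injective fun p : ℕ × ℕ => (2 * p.1, 2 * p.2) := fun p q hpq => by
    simpa [Prod.ext_iff] using hpq
  rw [← hinj.tsum_eq]
  · refine tsum_congr fun p => ?_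
    have hhalf (k : ℕ) : (ascPochhammer ℝ k).eval (1 / 2 : ℝ) ≠ 0 :=
      (ascPochhammer_pos _ _ (by norm_num)).ne'
    have h₁ := hhalf p.1
    have h₂ := hhalf p.2
    simp only [appellCoeff, gegenbauerMoment_two_mul, factorial_two_mul_eq, ← mul_add,
      ascPochhammer_eval_two_mul, pow_add, pow_mul]
    field_simp
  · intro p hp
    by_contra hrange
    have hodd : Odd p.1 ∨ Odd p.2 := by
      contrapose! hrange
      simp only [Nat.not_odd_iff_even] at hrange
      exact ⟨(p.1 / 2, p.2 / 2), Prod.ext (Nat.two_mul_div_two_of_even hrange.1)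
        (Nat.two_mul_div_two_of_even hrange.2)⟩
    rcases hodd with h | h <;> simp [gegenbauerMoment_of_odd _ h] at hp

end Moments

section Beta

lemma ofReal_rpow_mul_one_sub_rpow (a b : ℝ) {x : ℝ} (hx : x ∈ Icc (0 : ℝ) 1) :
    ((x ^ (a - 1) * (1 - x) ^ (b - 1) : ℝ) : ℂ) =
      (x : ℂ) ^ ((a : ℂ) - 1) * (1 - x : ℂ) ^ ((b : ℂ) - 1) := by
  rw [Complex.ofReal_mul, Complex.ofReal_cpow hx.1, Complex.ofReal_cpow (sub_nonneg.2 hx.2)]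
  push_cast
  rfl

lemma intervalIntegrable_rpow_mul_one_sub_rpow {a b : ℝ} (ha : 0 < a) (hb : 0 < b) :
    IntervalIntegrable (fun x : ℝ => x ^ (a - 1) * (1 - x) ^ (b - 1)) volume 0 1 := by
  have h := Complex.betaIntegral_convergent (u := a) (v := b) (by simpa) (by simpa)
  rw [intervalIntegrable_iff_integrableOn_Icc_of_le zero_le_one] at h ⊢
  refine IntegrableOn.congr_fun (f := fun x : ℝ => RCLike.re _) h.re (fun x hx => ?_)
    measurableSet_Icc
  exact congrArg Complex.re (ofReal_rpow_mul_one_sub_rpow a b hx).symm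

lemma integral_rpow_mul_one_sub_rpow {a b : ℝ} (ha : 0 < a) (hb : 0 < b) :
    ∫ x in (0 : ℝ)..1, x ^ (a - 1) * (1 - x) ^ (b - 1) = ProbabilityTheory.beta a b := by
  rw [ProbabilityTheory.beta_eq_betaIntegralReal a b ha hb, Complex.betaIntegral,
    ← Complex.ofReal_re (∫ x in (0 : ℝ)..1, x ^ (a - 1) * (1 - x) ^ (b - 1)),
    ← intervalIntegral.integral_ofReal]
  congr 1
  refine intervalIntegral.integral_congr fun x hx => ?_
  exact ofReal_rpow_mul_one_sub_rpow a b (uIcc_of_le (zero_le_one' ℝ) ▸ hx)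

lemma one_sub_sq_rpow_eq (s : ℝ) {w : ℝ} (hw : w ∈ Icc (-1 : ℝ) 1) :
    (1 - w ^ 2) ^ s = 4 ^ s *
      ((1 / 2 * w + 1 / 2) ^ (s + 1 - 1) * (1 - (1 / 2 * w + 1 / 2)) ^ (s + 1 - 1)) := by
  obtain ⟨hw₁, hw₂⟩ := hw
  rw [add_sub_cancel_right, ← mul_rpow (by linarith) (by linarith),
    ← mul_rpow (by norm_num) (by nlinarith)]
  ring_nf

lemma intervalIntegrable_one_sub_sq_rpow {s : ℝ} (hs : -1 < s) :
    IntervalIntegrable (fun w : ℝ => (1 - w ^ 2) ^ s) volume (-1) 1 := by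
  have h := (((intervalIntegrable_rpow_mul_one_sub_rpow (a := s + 1) (b := s + 1) (by linarith)
    (by linarith)).comp_add_right (1 / 2)).comp_mul_left (c := 1 / 2)).const_mul (4 ^ s)
  norm_num only at h
  refine h.congr fun w hw => (one_sub_sq_rpow_eq s ?_).symm
  exact Ioc_subset_Icc_self (uIoc_of_le (by norm_num : (-1 : ℝ) ≤ 1) ▸ hw)

lemma integral_one_sub_sq_rpow {s : ℝ} (hs : -1 < s) :
    ∫ w in (-1 : ℝ)..1, (1 - w ^ 2) ^ s =
      2 ^ (2 * s + 1) * ProbabilityTheory.beta (s + 1) (s + 1) := by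
  have hsubst := intervalIntegral.integral_comp_mul_add (a := -1) (b := 1)
    (fun x : ℝ => x ^ (s + 1 - 1) * (1 - x) ^ (s + 1 - 1)) (one_half_pos (α := ℝ)).ne' (1 / 2)
  have hlower : (1 / 2 : ℝ) * -1 + 1 / 2 = 0 := by norm_num
  have hupper : (1 / 2 : ℝ) * 1 + 1 / 2 = 1 := by norm_num
  rw [hlower, hupper, integral_rpow_mul_one_sub_rpow (by linarith) (by linarith)] at hsubst
  calc ∫ w in (-1 : ℝ)..1, (1 - w ^ 2) ^ s
    _ = 4 ^ s * ((1 / 2 : ℝ)⁻¹ • ProbabilityTheory.beta (s + 1) (s + 1)) := by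
      rw [← hsubst, ← intervalIntegral.integral_const_mul]
      refine intervalIntegral.integral_congr fun w hw => one_sub_sq_rpow_eq s ?_
      rwa [uIcc_of_le (by norm_num)] at hw
    _ = 2 ^ (2 * s + 1) * ProbabilityTheory.beta (s + 1) (s + 1) := by
      rw [rpow_add_one two_ne_zero, rpow_mul zero_le_two, rpow_two, smul_eq_mul,
        show (2 : ℝ) ^ 2 = 4 by norm_num]
      ring

end Beta

/-- The density `u ↦ Γ(ν + 1) / (√π Γ(ν + 1 / 2)) (1 - u ^ 2) ^ (ν - 1 / 2)`. For `ν > -1 / 2` it is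
the density of the probability measure `PiMeas ν`; for `-1 < ν < -1 / 2` it is negative and not
integrable up to `±1`, but it is still the derivative of `PiFun ν`. -/
noncomputable def gegenbauerDensity (ν u : ℝ) : ℝ :=
  Real.Gamma (ν + 1) / (√π * Real.Gamma (ν + 1 / 2)) * (1 - u ^ 2) ^ (ν - 1 / 2)

section Gegenbauer

variable {ν : ℝ}

lemma gegenbauerDensity_neg (ν u : ℝ) : gegenbauerDensity ν (-u) = gegenbauerDensity ν u := by
  simp [gegenbauerDensity]

lemma gegenbauerDensity_nonneg (hν : -(1 / 2) < ν) {u : ℝ} (hu : u ∈ Icc (-1 : ℝ) 1) :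
    0 ≤ gegenbauerDensity ν u := by
  have h₁ : 0 < Real.Gamma (ν + 1) := Gamma_pos_of_pos (by linarith)
  have h₂ : 0 < Real.Gamma (ν + 1 / 2) := Gamma_pos_of_pos (by linarith)
  have h₃ : 0 ≤ 1 - u ^ 2 := by nlinarith [hu.1, hu.2]
  unfold gegenbauerDensity
  positivity

@[fun_prop]
lemma measurable_gegenbauerDensity (ν : ℝ) : Measurable (gegenbauerDensity ν) := by
  unfold gegenbauerDensity
  fun_prop

lemma continuousAt_gegenbauerDensity (ν : ℝ) {u : ℝ} (hu : u ∈ Ioo (-1 : ℝ) 1) :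
    ContinuousAt (gegenbauerDensity ν) u := by
  have h : 1 - u ^ 2 ≠ 0 := by nlinarith [hu.1, hu.2]
  have hbase : ContinuousAt (fun w : ℝ => 1 - w ^ 2) u := by fun_prop
  exact (hbase.rpow_const (.inl h)).const_mul _

lemma intervalIntegrable_gegenbauerDensity (hν : -(1 / 2) < ν) :
    IntervalIntegrable (gegenbauerDensity ν) volume (-1) 1 :=
  (intervalIntegrable_one_sub_sq_rpow (by linarith)).const_mul _

lemma integral_gegenbauerDensity (hν : -(1 / 2) < ν) :
    ∫ u in (-1 : ℝ)..1, gegenbauerDensity ν u = 1 := by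
  have hΓ : Real.Gamma (2 * ν + 1) ≠ 0 := (Gamma_pos_of_pos (by linarith)).ne'
  have hdup := Gamma_mul_Gamma_add_half (ν + 1 / 2)
  rw [show ν + 1 / 2 + 1 / 2 = ν + 1 by ring, show 2 * (ν + 1 / 2) = 2 * ν + 1 by ring,
    show 1 - (2 * ν + 1) = -(2 * ν) by ring, rpow_neg zero_le_two] at hdup
  simp only [gegenbauerDensity]
  rw [intervalIntegral.integral_const_mul, integral_one_sub_sq_rpow (by linarith),
    ProbabilityTheory.beta, show 2 * (ν - 1 / 2) + 1 = 2 * ν by ring,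
    show ν - 1 / 2 + 1 = ν + 1 / 2 by ring, show ν + 1 / 2 + (ν + 1 / 2) = 2 * ν + 1 by ring]
  generalize Real.Gamma (2 * ν + 1) = g at *
  field_simp at hdup ⊢
  linear_combination hdup

lemma gegenbauerDensity_add_one (hν₁ : ν ≠ -1) (hν₂ : ν ≠ -(1 / 2)) {u : ℝ}
    (hu : u ∈ Ioo (-1 : ℝ) 1) :
    (2 * ν + 1) * gegenbauerDensity (ν + 1) u =
      2 * (ν + 1) * (1 - u ^ 2) * gegenbauerDensity ν u := by
  have h₁ : ν + 1 ≠ 0 := fun h => hν₁ (by linarith)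
  have h₂ : ν + 1 / 2 ≠ 0 := fun h => hν₂ (by linarith)
  have hu₀ : 1 - u ^ 2 ≠ 0 := by nlinarith [hu.1, hu.2]
  rw [gegenbauerDensity, gegenbauerDensity, Gamma_add_one h₁,
    show ν + 1 + 1 / 2 = ν + 1 / 2 + 1 by ring, Gamma_add_one h₂,
    show ν + 1 - 1 / 2 = ν - 1 / 2 + 1 by ring, rpow_add_one hu₀]
  have h₃ : 2 * ν + 1 ≠ 0 := fun h => hν₂ (by linarith)
  field_simp

lemma hasDerivAt_gegenbauerDensity_add_one (hν₁ : ν ≠ -1) (hν₂ : ν ≠ -(1 / 2)) {u : ℝ}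
    (hu : u ∈ Ioo (-1 : ℝ) 1) :
    HasDerivAt (gegenbauerDensity (ν + 1)) (-(2 * (ν + 1) * u * gegenbauerDensity ν u)) u := by
  have hu₀ : 1 - u ^ 2 ≠ 0 := by nlinarith [hu.1, hu.2]
  have h := (((hasDerivAt_pow 2 u).const_sub 1).rpow_const (p := ν + 1 - 1 / 2)
    (.inl hu₀)).const_mul (Real.Gamma (ν + 1 + 1) / (√π * Real.Gamma (ν + 1 + 1 / 2)))
  convert! h using 1
  have hstep := gegenbauerDensity_add_one hν₁ hν₂ hu
  have hrpow : (1 - u ^ 2) ^ (ν + 1 - 1 / 2) = (1 - u ^ 2) ^ (ν + 1 - 1 / 2 - 1) * (1 - u ^ 2) := by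
    rw [← rpow_add_one hu₀, sub_add_cancel]
  rw [gegenbauerDensity, hrpow] at hstep
  rw [← mul_left_inj' hu₀]
  push_cast
  linear_combination u * hstep

lemma hasDerivAt_pow_mul_gegenbauerDensity (hν₁ : ν ≠ -1) (hν₂ : ν ≠ -(1 / 2)) {u : ℝ}
    (hu : u ∈ Ioo (-1 : ℝ) 1) (n : ℕ) :
    HasDerivAt (fun w => w ^ (n + 1) * gegenbauerDensity (ν + 1) w)
      ((n + 1) * (u ^ n * gegenbauerDensity (ν + 1) u) -
        2 * (ν + 1) * (u ^ (n + 2) * gegenbauerDensity ν u)) u := by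
  convert! (hasDerivAt_pow (n + 1) u).mul (hasDerivAt_gegenbauerDensity_add_one hν₁ hν₂ hu) using 1
  push_cast
  ring

lemma intervalIntegrable_pow_mul_gegenbauerDensity (hν : -(1 / 2) < ν) (n : ℕ) :
    IntervalIntegrable (fun u => u ^ n * gegenbauerDensity ν u) volume (-1) 1 :=
  (intervalIntegrable_gegenbauerDensity hν).continuousOn_mul (by fun_prop)

lemma integral_pow_add_two_mul_gegenbauerDensity (hν : -(1 / 2) < ν) (n : ℕ) :
    ∫ u in (-1 : ℝ)..1, u ^ (n + 2) * gegenbauerDensity ν u =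
      (n + 1) / (2 * (ν + 1)) * ∫ u in (-1 : ℝ)..1, u ^ n * gegenbauerDensity (ν + 1) u := by
  have hint₁ := (intervalIntegrable_pow_mul_gegenbauerDensity (ν := ν + 1) (by linarith)
    n).const_mul (n + 1 : ℝ)
  have hint₂ := (intervalIntegrable_pow_mul_gegenbauerDensity hν (n + 2)).const_mul (2 * (ν + 1))
  have hcont : Continuous fun w => w ^ (n + 1) * gegenbauerDensity (ν + 1) w := by
    unfold gegenbauerDensity
    have h : 0 ≤ ν + 1 - 1 / 2 := by linarith
    fun_prop (disch := simpa using h)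
  have hboundary (u : ℝ) (hu : u ^ 2 = 1) : gegenbauerDensity (ν + 1) u = 0 := by
    rw [gegenbauerDensity, hu, sub_self, zero_rpow (by linarith), mul_zero]
  have h := intervalIntegral.integral_eq_sub_of_hasDerivAt_of_le
    (by norm_num : (-1 : ℝ) ≤ 1) hcont.continuousOn
    (fun u hu => hasDerivAt_pow_mul_gegenbauerDensity (by linarith) hν.ne' hu n)
    (hint₁.sub hint₂)
  rw [intervalIntegral.integral_sub hint₁ hint₂, intervalIntegral.integral_const_mul,
    intervalIntegral.integral_const_mul, hboundary 1 (by norm_num),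
    hboundary (-1) (by norm_num)] at h
  rw [div_mul_eq_mul_div, eq_div_iff (by linarith)]
  linarith

lemma integral_pow_mul_gegenbauerDensity (hν : -(1 / 2) < ν) (n : ℕ) :
    ∫ u in (-1 : ℝ)..1, u ^ n * gegenbauerDensity ν u = gegenbauerMoment ν n := by
  rcases Nat.even_or_odd' n with ⟨k, rfl | rfl⟩
  · induction k generalizing ν with
    | zero => simp [gegenbauerMoment, integral_gegenbauerDensity hν]
    | succ k ih =>
      rw [mul_add_one, integral_pow_add_two_mul_gegenbauerDensity hν, ih (by linarith),
        ← mul_add_one, gegenbauerMoment_two_mul, gegenbauerMoment_two_mul, ascPochhammer_succ_eval,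
        ascPochhammer_succ_left]
      simp only [Polynomial.eval_mul, Polynomial.eval_X, Polynomial.eval_comp, Polynomial.eval_add,
        Polynomial.eval_one]
      push_cast
      field_simp
      ring
  · have h := intervalIntegral.integral_comp_neg (a := -1) (b := 1)
      fun u : ℝ => u ^ (2 * k + 1) * gegenbauerDensity ν u
    simp only [gegenbauerDensity_neg, (odd_two_mul_add_one k).neg_pow, neg_mul, neg_neg,
      intervalIntegral.integral_neg] at h
    rw [gegenbauerMoment_of_odd _ (odd_two_mul_add_one k)]
    linarith

end Gegenbauer

section PiMeas

variable {ν : ℝ}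

lemma integral_PiMeas_neg_half (f : ℝ → ℝ) :
    ∫ u, f u ∂(PiMeas (-(1 / 2))) = (f (-1) + f 1) / 2 := by
  rw [PiMeas, if_pos rfl, integral_smul_measure, integral_add_measure
    (integrable_dirac (by simp)) (integrable_dirac (by simp)), integral_dirac, integral_dirac,
    ENNReal.toReal_inv, ENNReal.toReal_ofNat, smul_eq_mul, inv_mul_eq_div]

lemma PiMeas_of_ne (hν : ν ≠ -(1 / 2)) :
    PiMeas ν = (volume.restrict (Icc (-1) 1)).withDensity
      fun u => ENNReal.ofReal (gegenbauerDensity ν u) :=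
  if_neg hν

lemma integral_PiMeas (hν : -(1 / 2) < ν) (f : ℝ → ℝ) :
    ∫ u, f u ∂(PiMeas ν) = ∫ u in (-1 : ℝ)..1, f u * gegenbauerDensity ν u := by
  rw [PiMeas_of_ne hν.ne', integral_withDensity_eq_integral_toReal_smul (by fun_prop) (by simp),
    intervalIntegral.integral_of_le (by norm_num), ← integral_Icc_eq_integral_Ioc]
  refine setIntegral_congr_fun measurableSet_Icc fun u hu => ?_
  simp only [ENNReal.toReal_ofReal (gegenbauerDensity_nonneg hν hu), smul_eq_mul, mul_comm]

lemma integral_pow_PiMeas (hν : -(1 / 2) ≤ ν) (n : ℕ) :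
    ∫ u, u ^ n ∂(PiMeas ν) = gegenbauerMoment ν n := by
  rcases hν.eq_or_lt with rfl | hν
  · rw [integral_PiMeas_neg_half, gegenbauerMoment_neg_half, one_pow]
  · rw [integral_PiMeas hν, integral_pow_mul_gegenbauerDensity hν]

lemma isFiniteMeasure_PiMeas (hν : -(1 / 2) ≤ ν) : IsFiniteMeasure (PiMeas ν) := by
  rcases hν.eq_or_lt with rfl | hν
  · rw [PiMeas, if_pos rfl]
    exact ⟨by simp⟩
  · rw [PiMeas_of_ne hν.ne']
    refine isFiniteMeasure_withDensity_ofReal (Integrable.hasFiniteIntegral ?_)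
    exact (intervalIntegrable_iff_integrableOn_Icc_of_le (by norm_num)).1
      (intervalIntegrable_gegenbauerDensity hν)

lemma ae_PiMeas_abs_le_one (ν : ℝ) : ∀ᵐ u ∂(PiMeas ν), |u| ≤ 1 := by
  unfold PiMeas
  split_ifs
  · refine Measure.ae_smul_measure (ae_add_measure_iff.2 ⟨?_, ?_⟩) _ <;> simp [ae_dirac_eq]
  · refine (withDensity_absolutelyContinuous _ _).ae_le ?_
    filter_upwards [ae_restrict_mem measurableSet_Icc] with u hu using abs_le.2 hu

end PiMeas

section PiFun

variable {ν : ℝ}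

lemma PiFun_eq_integral (ν v : ℝ) : PiFun ν v = ∫ w in (0 : ℝ)..v, gegenbauerDensity ν w :=
  (intervalIntegral.integral_const_mul _ _).symm

lemma PiFun_neg (ν v : ℝ) : PiFun ν (-v) = -PiFun ν v := by
  have h := intervalIntegral.integral_comp_neg (a := 0) (b := v) (gegenbauerDensity ν)
  simp only [gegenbauerDensity_neg, neg_zero] at h
  rw [PiFun_eq_integral, PiFun_eq_integral, h, intervalIntegral.integral_symm]

lemma intervalIntegrable_zero_gegenbauerDensity (hν : -(1 / 2) < ν) {v : ℝ}
    (hv : v ∈ Icc (-1 : ℝ) 1) : IntervalIntegrable (gegenbauerDensity ν) volume 0 v := by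
  refine (intervalIntegrable_gegenbauerDensity hν).mono_set ?_
  rw [uIcc_of_le (by norm_num : (-1 : ℝ) ≤ 1)]
  exact ordConnected_Icc.uIcc_subset (by simp) hv

lemma PiFun_one (hν : -(1 / 2) < ν) : PiFun ν 1 = 1 / 2 := by
  have hneg : ∫ w in (0 : ℝ)..(-1), gegenbauerDensity ν w = -PiFun ν 1 := by
    rw [← PiFun_eq_integral, PiFun_neg]
  have h := intervalIntegral.integral_interval_sub_left
    (intervalIntegrable_zero_gegenbauerDensity hν (by simp : (1 : ℝ) ∈ Icc (-1) 1))
    (intervalIntegrable_zero_gegenbauerDensity hν (by simp : (-1 : ℝ) ∈ Icc (-1) 1))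
  rw [integral_gegenbauerDensity hν, hneg, ← PiFun_eq_integral] at h
  linarith

lemma continuousOn_PiFun (hν : -(1 / 2) < ν) : ContinuousOn (PiFun ν) (uIcc (-1) 1) := by
  simp only [funext (PiFun_eq_integral ν)]
  exact intervalIntegral.continuousOn_primitive_interval'
    (intervalIntegrable_gegenbauerDensity hν) (by simp)

lemma uIcc_zero_subset_Ioo {v : ℝ} (hv : v ∈ Ioo (-1 : ℝ) 1) : uIcc 0 v ⊆ Ioo (-1 : ℝ) 1 :=
  ordConnected_Ioo.uIcc_subset (by simp) hv

lemma intervalIntegrable_zero_gegenbauerDensity_of_mem_Ioo (ν : ℝ) {v : ℝ}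
    (hv : v ∈ Ioo (-1 : ℝ) 1) : IntervalIntegrable (gegenbauerDensity ν) volume 0 v :=
  ContinuousOn.intervalIntegrable fun _ hw =>
    (continuousAt_gegenbauerDensity ν (uIcc_zero_subset_Ioo hv hw)).continuousWithinAt

lemma hasDerivAt_PiFun (ν : ℝ) {v : ℝ} (hv : v ∈ Ioo (-1 : ℝ) 1) :
    HasDerivAt (PiFun ν) (gegenbauerDensity ν v) v := by
  simp only [funext (PiFun_eq_integral ν)]
  exact intervalIntegral.integral_hasDerivAt_right
    (intervalIntegrable_zero_gegenbauerDensity_of_mem_Ioo ν hv)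
    (measurable_gegenbauerDensity ν).stronglyMeasurable.stronglyMeasurableAtFilter
    (continuousAt_gegenbauerDensity ν hv)

lemma integral_pow_mul_PiFun_of_neg_half_lt (hν : -(1 / 2) < ν) (n : ℕ) :
    (n + 1) * ∫ v in (-1 : ℝ)..1, v ^ n * PiFun ν v =
      gegenbauerMoment (-(1 / 2)) (n + 1) - gegenbauerMoment ν (n + 1) := by
  have hderiv (v : ℝ) : HasDerivAt (fun v : ℝ => v ^ (n + 1)) ((n + 1) * v ^ n) v := by
    simpa using hasDerivAt_pow (n + 1) v
  have h := intervalIntegral.integral_mul_deriv_eq_deriv_mul_of_hasDerivAt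
    (continuousOn_PiFun hν) (continuous_pow (n + 1)).continuousOn
    (fun v hv => hasDerivAt_PiFun ν (by simpa using hv)) (fun v _ => hderiv v)
    (intervalIntegrable_gegenbauerDensity hν) (Continuous.intervalIntegrable (by fun_prop) _ _)
  rw [PiFun_neg, PiFun_one hν] at h
  simp only [mul_comm (gegenbauerDensity ν _)] at h
  rw [integral_pow_mul_gegenbauerDensity hν] at h
  rw [gegenbauerMoment_neg_half, ← intervalIntegral.integral_const_mul]
  calc ∫ v in (-1 : ℝ)..1, (n + 1) * (v ^ n * PiFun ν v)
    _ = ∫ v in (-1 : ℝ)..1, PiFun ν v * ((n + 1) * v ^ n) := by congr! 2; ring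
    _ = _ := by rw [h, one_pow]; ring

lemma PiFun_eq_PiFun_add_one_sub (hν₁ : ν ≠ -1) (hν₂ : ν ≠ -(1 / 2)) {v : ℝ}
    (hv : v ∈ Ioo (-1 : ℝ) 1) :
    PiFun ν v = PiFun (ν + 1) v - v * gegenbauerDensity (ν + 1) v / (2 * (ν + 1)) := by
  have hderiv (w : ℝ) (hw : w ∈ uIcc 0 v) :
      HasDerivAt (fun w => w * gegenbauerDensity (ν + 1) w)
        (2 * (ν + 1) * (gegenbauerDensity (ν + 1) w - gegenbauerDensity ν w)) w := by
    have hw := uIcc_zero_subset_Ioo hv hw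
    convert! hasDerivAt_pow_mul_gegenbauerDensity hν₁ hν₂ hw 0 using 1
    · simp
    · push_cast
      linear_combination gegenbauerDensity_add_one hν₁ hν₂ hw
  have hint (μ : ℝ) := intervalIntegrable_zero_gegenbauerDensity_of_mem_Ioo μ hv
  have h := intervalIntegral.integral_eq_sub_of_hasDerivAt hderiv
    (((hint (ν + 1)).sub (hint ν)).const_mul _)
  rw [intervalIntegral.integral_const_mul, intervalIntegral.integral_sub (hint _) (hint _),
    ← PiFun_eq_integral, ← PiFun_eq_integral, zero_mul, sub_zero] at h
  have hν₀ : ν + 1 ≠ 0 := fun h => hν₁ (by linarith)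
  rw [← h]
  field_simp
  ring

variable {β : ℝ}

lemma integrableOn_PiFun (hβ₁ : -1 < β) (hβ₂ : β ≠ -(1 / 2)) :
    IntegrableOn (PiFun β) (Ioo (-1) 1) := by
  have hle : (-1 : ℝ) ≤ 1 := by norm_num
  have h := (continuousOn_PiFun (ν := β + 1) (by linarith)).intervalIntegrable.sub
    ((intervalIntegrable_pow_mul_gegenbauerDensity (ν := β + 1) (by linarith) 1).div_const
      (2 * (β + 1)))
  refine ((intervalIntegrable_iff_integrableOn_Ioo_of_le hle).1 h).congr_fun (fun v hv => ?_)
    measurableSet_Ioo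
  simp only [pow_one, PiFun_eq_PiFun_add_one_sub hβ₁.ne' hβ₂ hv]

lemma integral_pow_mul_PiFun (hβ₁ : -1 < β) (hβ₂ : β ≠ -(1 / 2)) (n : ℕ) :
    (n + 1) * ∫ v in Ioo (-1 : ℝ) 1, v ^ n * PiFun β v =
      gegenbauerMoment (-(1 / 2)) (n + 1) - gegenbauerMoment β (n + 1) := by
  have hle : (-1 : ℝ) ≤ 1 := by norm_num
  have hβ : -(1 / 2) < β + 1 := by linarith
  have hint₁ : IntervalIntegrable (fun v => v ^ n * PiFun (β + 1) v) volume (-1) 1 :=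
    ((by fun_prop : ContinuousOn (fun v : ℝ => v ^ n) _).mul
      (continuousOn_PiFun hβ)).intervalIntegrable
  have hint₂ := (intervalIntegrable_pow_mul_gegenbauerDensity hβ (n + 1)).div_const (2 * (β + 1))
  calc (n + 1) * ∫ v in Ioo (-1 : ℝ) 1, v ^ n * PiFun β v
    _ = (n + 1) * ∫ v in (-1 : ℝ)..1, (v ^ n * PiFun (β + 1) v -
        v ^ (n + 1) * gegenbauerDensity (β + 1) v / (2 * (β + 1))) := by
      rw [intervalIntegral.integral_of_le hle, integral_Ioc_eq_integral_Ioo]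
      congr 1
      refine setIntegral_congr_fun measurableSet_Ioo fun v hv => ?_
      simp only [PiFun_eq_PiFun_add_one_sub hβ₁.ne' hβ₂ hv]
      ring
    _ = gegenbauerMoment (-(1 / 2)) (n + 1) - gegenbauerMoment (β + 1) (n + 1) *
        (1 + (n + 1 : ℕ) / (2 * (β + 1))) := by
      rw [intervalIntegral.integral_sub hint₁ hint₂, mul_sub,
        integral_pow_mul_PiFun_of_neg_half_lt hβ, intervalIntegral.integral_div,
        integral_pow_mul_gegenbauerDensity hβ]
      push_cast
      ring
    _ = _ := by rw [gegenbauerMoment_add_one_mul hβ₁]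

end PiFun

section TermwiseIntegration

lemma abs_mul_add_abs_mul_lt_one {u v x y : ℝ} (hu : |u| ≤ 1) (hv : |v| ≤ 1)
    (h : |x| + |y| < 1) : |u * x| + |v * y| < 1 := by
  rw [abs_mul, abs_mul]
  refine (add_le_add ?_ ?_).trans_lt h <;> exact mul_le_of_le_one_left (abs_nonneg _) ‹_›

lemma hasSum_integral_mul_of_hasSum_pow {ι : Type*} [Countable ι] {μ : Measure ℝ}
    (hμ : ∀ᵐ u ∂μ, |u| ≤ 1) {g : ℝ → ℝ} (hg : Integrable g μ) {c : ι → ℝ}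
    {e : ι → ℕ} {F : ℝ → ℝ} (hF : ∀ u, |u| ≤ 1 → HasSum (fun i => c i * u ^ e i) (F u)) :
    HasSum (fun i => c i * ∫ u, u ^ e i * g u ∂μ) (∫ u, F u * g u ∂μ) := by
  have hc : Summable c := by simpa using (hF 1 (by simp)).summable
  simp only [← integral_const_mul, ← mul_assoc]
  refine hasSum_integral_of_dominated_convergence (fun i u => |c i| * |g u|)
    (fun i => by fun_prop) (fun i => ?_) (.of_forall fun u => hc.abs.mul_right _) ?_ ?_
  · filter_upwards [hμ] with u hu
    rw [Real.norm_eq_abs, abs_mul, abs_mul, abs_pow]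
    gcongr
    exact mul_le_of_le_one_right (abs_nonneg _) (pow_le_one₀ (abs_nonneg u) hu)
  · simp only [tsum_mul_right]
    exact hg.abs.const_mul _
  · filter_upwards [hμ] with u hu using (hF u hu).mul_right _

lemma hasSum_integral_integral_mul_of_hasSum_pow {μ ν : Measure ℝ} [IsFiniteMeasure μ]
    (hμ : ∀ᵐ u ∂μ, |u| ≤ 1) (hν : ∀ᵐ v ∂ν, |v| ≤ 1) {g : ℝ → ℝ} (hg : Integrable g ν)
    {c : ℕ × ℕ → ℝ} {f : ℝ → ℝ → ℝ}
    (hf : ∀ u v, |u| ≤ 1 → |v| ≤ 1 → HasSum (fun p => c p * u ^ p.1 * v ^ p.2) (f u v)) :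
    HasSum (fun p => c p * (∫ u, u ^ p.1 ∂μ) * ∫ v, v ^ p.2 * g v ∂ν)
      (∫ v, (∫ u, f u v ∂μ) * g v ∂ν) := by
  have hinner (v : ℝ) (hv : |v| ≤ 1) :
      HasSum (fun p => c p * (∫ u, u ^ p.1 ∂μ) * v ^ p.2) (∫ u, f u v ∂μ) := by
    simpa [mul_right_comm] using hasSum_integral_mul_of_hasSum_pow (g := 1) hμ
      (integrable_const 1) fun u hu => by simpa [mul_right_comm] using hf u v hu hv
  exact hasSum_integral_mul_of_hasSum_pow hν hg hinner

lemma hasSum_integral_integral_one_sub_rpow_neg {μ ν : Measure ℝ} [IsFiniteMeasure μ]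
    (hμ : ∀ᵐ u ∂μ, |u| ≤ 1) (hν : ∀ᵐ v ∂ν, |v| ≤ 1) {g : ℝ → ℝ} (hg : Integrable g ν)
    (a : ℝ) {x y : ℝ} (h : |x| + |y| < 1) :
    HasSum (fun p => appellCoeff a p * x ^ p.1 * y ^ p.2 * (∫ u, u ^ p.1 ∂μ) *
        ∫ v, v ^ p.2 * g v ∂ν)
      (∫ v, (∫ u, (1 - (u * x + v * y)) ^ (-a) ∂μ) * g v ∂ν) := by
  refine hasSum_integral_integral_mul_of_hasSum_pow hμ hν hg fun u v hu hv => ?_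
  convert! hasSum_appellCoeff_mul_pow a (abs_mul_add_abs_mul_lt_one hu hv h) using 2 with p
  ring

end TermwiseIntegration

section Representation

variable {α β : ℝ}

lemma hasSum_integral_integral_PiMeas_neg_half (hα : -(1 / 2) ≤ α) (a : ℝ) {x y : ℝ}
    (h : |x| + |y| < 1) :
    HasSum (fun p : ℕ × ℕ => appellCoeff a p * x ^ p.1 * y ^ p.2 *
        (gegenbauerMoment α p.1 * gegenbauerMoment (-(1 / 2)) p.2))
      (∫ v, (∫ u, (1 - (u * x + v * y)) ^ (-a) ∂(PiMeas α)) ∂(PiMeas (-(1 / 2)))) := by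
  have := isFiniteMeasure_PiMeas hα
  have := isFiniteMeasure_PiMeas (le_refl (-(1 / 2)))
  simpa only [Pi.one_apply, mul_one, integral_pow_PiMeas hα, integral_pow_PiMeas le_rfl,
    mul_assoc] using
    hasSum_integral_integral_one_sub_rpow_neg (g := 1) (ae_PiMeas_abs_le_one α)
      (ae_PiMeas_abs_le_one (-(1 / 2))) (integrable_const 1) a h

lemma hasSum_integral_integral_mul_PiFun (hα : -(1 / 2) ≤ α) (hβ₁ : -1 < β)
    (hβ₂ : β ≠ -(1 / 2)) (a : ℝ) {x y : ℝ} (h : |x| + |y| < 1) :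
    HasSum (fun p : ℕ × ℕ => appellCoeff a p * x ^ p.1 * y ^ p.2 *
        (gegenbauerMoment α p.1 * (gegenbauerMoment (-(1 / 2)) p.2 - gegenbauerMoment β p.2)))
      (a * y * ∫ v in Ioo (-1 : ℝ) 1,
        (∫ u, (1 - (u * x + v * y)) ^ (-(a + 1)) ∂(PiMeas α)) * PiFun β v) := by
  have := isFiniteMeasure_PiMeas hα
  have hIoo : ∀ᵐ v ∂(volume.restrict (Ioo (-1 : ℝ) 1)), |v| ≤ 1 := by
    filter_upwards [ae_restrict_mem measurableSet_Ioo] with v hv using (abs_lt.2 hv).le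
  have hinj : Function.Injective fun p : ℕ × ℕ => (p.1, p.2 + 1) := fun p q hpq => by
    simpa [Prod.ext_iff] using hpq
  rw [← hinj.hasSum_iff]
  · convert! (hasSum_integral_integral_one_sub_rpow_neg (ae_PiMeas_abs_le_one α) hIoo
      (integrableOn_PiFun hβ₁ hβ₂) (a + 1) h).mul_left (a * y) using 2 with p
    simp only [Function.comp, integral_pow_PiMeas hα, ← integral_pow_mul_PiFun hβ₁ hβ₂]
    linear_combination x ^ p.1 * y ^ (p.2 + 1) * gegenbauerMoment α p.1 *
      (∫ v in Ioo (-1 : ℝ) 1, v ^ p.2 * PiFun β v) * appellCoeff_snd_add_one a p.1 p.2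
  · rintro ⟨m, _ | n⟩ hp
    · simp [gegenbauerMoment]
    · exact absurd ⟨(m, n), rfl⟩ hp

theorem F4_sq_eq_integral (hα : -(1 / 2) ≤ α) (hβ₁ : -1 < β) (hβ₂ : β ≠ -(1 / 2)) (a : ℝ)
    {x y : ℝ} (h : |x| + |y| < 1) :
    F4 (a / 2) ((a + 1) / 2) (α + 1) (β + 1) (x ^ 2) (y ^ 2) =
      (∫ v, (∫ u, (1 - (u * x + v * y)) ^ (-a) ∂(PiMeas α)) ∂(PiMeas (-(1 / 2)))) -
        a * y * ∫ v in Ioo (-1 : ℝ) 1,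
          (∫ u, (1 - (u * x + v * y)) ^ (-(a + 1)) ∂(PiMeas α)) * PiFun β v := by
  rw [F4_sq_eq_tsum, ← ((hasSum_integral_integral_PiMeas_neg_half hα a h).sub
    (hasSum_integral_integral_mul_PiFun hα hβ₁ hβ₂ a h)).tsum_eq]
  refine tsum_congr fun p => ?_
  ring

end Representation

/-- The square root of the first argument of `F4` in `Hker α β t θ φ`, up to sign. -/
noncomputable def sinArg (t θ φ : ℝ) : ℝ := sin (θ / 2) * sin (φ / 2) / cosh (t / 2)

/-- The square root of the second argument of `F4` in `Hker α β t θ φ`, up to sign. -/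
noncomputable def cosArg (t θ φ : ℝ) : ℝ := cos (θ / 2) * cos (φ / 2) / cosh (t / 2)

/-- The factor in front of `F4` in `Hker α β t θ φ`. -/
noncomputable def poissonFactor (α β t : ℝ) : ℝ :=
  cab α β * sinh (t / 2) / cosh (t / 2) ^ (α + β + 2)

section Kernel

variable {α β t θ φ u v : ℝ}

lemma abs_sin_mul_sin_add_abs_cos_mul_cos_le_one (x y : ℝ) :
    |sin x * sin y| + |cos x * cos y| ≤ 1 := by
  rw [abs_mul, abs_mul]
  nlinarith [sq_nonneg (|sin x| - |sin y|), sq_nonneg (|cos x| - |cos y|), sq_abs (sin x),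
    sq_abs (sin y), sq_abs (cos x), sq_abs (cos y), sin_sq_add_cos_sq x, sin_sq_add_cos_sq y]

lemma abs_sinArg_add_abs_cosArg_lt_one (ht : t ≠ 0) (θ φ : ℝ) :
    |sinArg t θ φ| + |cosArg t θ φ| < 1 := by
  rw [sinArg, cosArg, abs_div, abs_div, ← add_div, abs_of_pos (cosh_pos _),
    div_lt_one (cosh_pos _)]
  exact (abs_sin_mul_sin_add_abs_cos_mul_cos_le_one _ _).trans_lt
    (one_lt_cosh.2 (div_ne_zero ht two_ne_zero))

lemma one_sub_sinArg_add_cosArg_pos (ht : t ≠ 0) (θ φ : ℝ) (hu : |u| ≤ 1) (hv : |v| ≤ 1) :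
    0 < 1 - (u * sinArg t θ φ + v * cosArg t θ φ) := by
  have h := abs_mul_add_abs_mul_lt_one hu hv (abs_sinArg_add_abs_cosArg_lt_one ht θ φ)
  linarith [le_abs_self (u * sinArg t θ φ), le_abs_self (v * cosArg t θ φ)]

lemma Hker_eq (α β t θ φ : ℝ) : Hker α β t θ φ = poissonFactor α β t *
    F4 ((α + β + 2) / 2) ((α + β + 2 + 1) / 2) (α + 1) (β + 1) (sinArg t θ φ ^ 2)
      (cosArg t θ φ ^ 2) := by
  rw [show α + β + 2 + 1 = α + β + 3 by ring]
  rfl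

lemma Psi_eq (h : 0 ≤ 1 - (u * sinArg t θ φ + v * cosArg t θ φ)) :
    Psi α β t θ φ u v = poissonFactor α β t *
      (1 - (u * sinArg t θ φ + v * cosArg t θ φ)) ^ (-(α + β + 2)) := by
  have hcosh : 0 < cosh (t / 2) := cosh_pos _
  have hbase : cosh (t / 2) - 1 + qf θ φ u v =
      cosh (t / 2) * (1 - (u * sinArg t θ φ + v * cosArg t θ φ)) := by
    rw [qf, sinArg, cosArg]
    field_simp
    ring
  rw [Psi, poissonFactor, hbase, mul_rpow hcosh.le h, rpow_neg h, ← div_eq_mul_inv, div_div]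

lemma hasDerivAt_Psi (h : 0 < 1 - (u * sinArg t θ φ + v * cosArg t θ φ)) :
    HasDerivAt (Psi α β t θ φ u) (poissonFactor α β t * ((α + β + 2) * cosArg t θ φ) *
      (1 - (u * sinArg t θ φ + v * cosArg t θ φ)) ^ (-(α + β + 2 + 1))) v := by
  have hbase : HasDerivAt (fun w => 1 - (u * sinArg t θ φ + w * cosArg t θ φ))
      (-(1 * cosArg t θ φ)) v :=
    (((hasDerivAt_id v).mul_const _).const_add _).const_sub 1
  refine HasDerivAt.congr_of_eventuallyEq ?_
    ((hbase.continuousAt.eventually (lt_mem_nhds h)).mono fun w hw => Psi_eq hw.le)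
  convert! (hbase.rpow_const (p := -(α + β + 2)) (.inl h.ne')).const_mul (poissonFactor α β t)
    using 1
  rw [neg_add']
  ring

lemma integral_Psi (ht : t ≠ 0) (hv : |v| ≤ 1) :
    ∫ u, Psi α β t θ φ u v ∂(PiMeas α) = poissonFactor α β t *
      ∫ u, (1 - (u * sinArg t θ φ + v * cosArg t θ φ)) ^ (-(α + β + 2)) ∂(PiMeas α) := by
  rw [← integral_const_mul]
  refine integral_congr_ae ((ae_PiMeas_abs_le_one α).mono fun u hu => ?_)
  exact Psi_eq (one_sub_sinArg_add_cosArg_pos ht θ φ hu hv).le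

lemma integral_neg_deriv_Psi (ht : t ≠ 0) (hv : |v| ≤ 1) :
    ∫ u, -deriv (fun v' => Psi α β t θ φ u v') v ∂(PiMeas α) =
      -(poissonFactor α β t * ((α + β + 2) * cosArg t θ φ)) *
        ∫ u, (1 - (u * sinArg t θ φ + v * cosArg t θ φ)) ^ (-(α + β + 2 + 1)) ∂(PiMeas α) := by
  rw [← integral_const_mul]
  refine integral_congr_ae ((ae_PiMeas_abs_le_one α).mono fun u hu => ?_)
  simp only [neg_mul, (hasDerivAt_Psi (one_sub_sinArg_add_cosArg_pos ht θ φ hu hv)).deriv]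

lemma integral_integral_Psi (ht : t ≠ 0) (γ : ℝ) :
    ∫ v, (∫ u, Psi α β t θ φ u v ∂(PiMeas α)) ∂(PiMeas γ) = poissonFactor α β t *
      ∫ v, (∫ u, (1 - (u * sinArg t θ φ + v * cosArg t θ φ)) ^ (-(α + β + 2)) ∂(PiMeas α))
        ∂(PiMeas γ) := by
  rw [← integral_const_mul]
  exact integral_congr_ae ((ae_PiMeas_abs_le_one γ).mono fun v hv => integral_Psi ht hv)

lemma integral_integral_neg_deriv_Psi_mul (ht : t ≠ 0) (g : ℝ → ℝ) :
    ∫ v in Ioo (-1 : ℝ) 1, (∫ u, -deriv (fun v' => Psi α β t θ φ u v') v ∂(PiMeas α)) * g v =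
      -(poissonFactor α β t * ((α + β + 2) * cosArg t θ φ)) * ∫ v in Ioo (-1 : ℝ) 1,
        (∫ u, (1 - (u * sinArg t θ φ + v * cosArg t θ φ)) ^ (-(α + β + 2 + 1)) ∂(PiMeas α)) *
          g v := by
  rw [← integral_const_mul]
  refine setIntegral_congr_fun measurableSet_Ioo fun v hv => ?_
  simp only [integral_neg_deriv_Psi ht (abs_lt.2 hv).le, mul_assoc]

end Kernel

theorem jacobi_poisson_representation_low_beta_general {α β t : ℝ} (hβ₁ : -1 < β)
    (hβ₂ : β ≠ -(1 / 2)) (hα : -(1 / 2) ≤ α) (ht : t ≠ 0) (θ φ : ℝ) :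
    Hker α β t θ φ =
      (∫ v in Ioo (-1 : ℝ) 1,
          (∫ u, (-(deriv (fun v' => Psi α β t θ φ u v') v)) ∂(PiMeas α)) * PiFun β v)
      + ∫ v, (∫ u, Psi α β t θ φ u v ∂(PiMeas α)) ∂(PiMeas (-(1/2))) := by
  rw [Hker_eq, F4_sq_eq_integral hα hβ₁ hβ₂ _ (abs_sinArg_add_abs_cosArg_lt_one ht θ φ),
    integral_integral_neg_deriv_Psi_mul ht, integral_integral_Psi ht]
  ring

theorem jacobi_poisson_representation_low_beta (α β : ℝ)
    (hβ₁ : -1 < β) (hβ₂ : β < -(1/2)) (hα : -(1/2) ≤ α)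
    (t : ℝ) (ht : 0 < t) (θ φ : ℝ) (hθ : θ ∈ Icc (0 : ℝ) π) (hφ : φ ∈ Icc (0 : ℝ) π) :
    Hker α β t θ φ =
      (∫ v in Ioo (-1 : ℝ) 1,
          (∫ u, (-(deriv (fun v' => Psi α β t θ φ u v') v)) ∂(PiMeas α)) * PiFun β v)
      + ∫ v, (∫ u, Psi α β t θ φ u v ∂(PiMeas α)) ∂(PiMeas (-(1/2))) :=
  jacobi_poisson_representation_low_beta_general hβ₁ hβ₂.ne hα ht.ne' θ φ
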